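/- Fix an integer n ≥ 0 and real numbers α ≥ 0, γ > 0, Q₁₁ ≥ 0, Q₂₂ ≥ 0, and Q₁₂ ∈ ℝ. Define P₁₂ = (−n²π² + √(n⁴π⁴ + γ²Q₁₁))/γ², P₂₂ = (−α + √(α² + γ²(Q₂₂ + 2P₁₂)))/γ², and P₁₁ = αP₁₂ + (n²π² + γ²P₁₂)P₂₂ − Q₁₂. Then P₁₂ ≥ 0, P₂₂ ≥ 0, and these values satisfy the coupled algebraic Riccati equations: 0 = −2n²π²P₁₂ + Q₁₁ − γ²P₁₂², 0 = P₁₁ − αP₁₂ − n²π²P₂₂ + Q₁₂ − γ²P₁₂P₂₂, and 0 = 2P₁₂ − 2αP₂₂ + Q₂₂ − γ²P₂₂². -/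

import Mathlib

/-!
The three equations are triangular. The first is a scalar Riccati equation `r p² + 2 a p = q` in
`P₁₂` alone; once `P₁₂` is known, the third is a scalar Riccati equation in `P₂₂`; the second is
then linear in `P₁₁`. The larger root of such a quadratic is nonnegative because
`|a| ≤ √(a² + r q)` for `r, q ≥ 0`, and `P₁₂ ≥ 0` is what keeps the constant term
`Q₂₂ + 2 P₁₂` of the third equation nonnegative.
-/

/-- The root `(-a + √(a² + r q)) / r` of the scalar Riccati equation `r p² + 2 a p = q`, the
larger one when `0 < r`. For `r = 0` it takes the junk value `0`. -/
noncomputable def scalarRiccatiRoot (a r q : ℝ) : ℝ :=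
  (-a + √(a ^ 2 + r * q)) / r

theorem scalarRiccatiRoot_nonneg (a : ℝ) {r q : ℝ} (hr : 0 ≤ r) (hq : 0 ≤ q) :
    0 ≤ scalarRiccatiRoot a r q := by
  have ha : a ≤ √(a ^ 2 + r * q) :=
    Real.le_sqrt_of_sq_le (le_add_of_nonneg_right (mul_nonneg hr hq))
  exact div_nonneg (le_neg_add_iff_le.mpr ha) hr

theorem scalarRiccatiRoot_equation {a r q : ℝ} (hr : r ≠ 0) (hdisc : 0 ≤ a ^ 2 + r * q) :
    r * scalarRiccatiRoot a r q ^ 2 + 2 * a * scalarRiccatiRoot a r q = q := by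
  have hroot : r * scalarRiccatiRoot a r q + a = √(a ^ 2 + r * q) := by
    rw [scalarRiccatiRoot, mul_div_cancel₀ _ hr, neg_add_cancel_comm]
  have hsq : (r * scalarRiccatiRoot a r q + a) ^ 2 = a ^ 2 + r * q := by
    rw [hroot, Real.sq_sqrt hdisc]
  apply mul_left_cancel₀ hr
  linear_combination hsq

/-- In the modal equations `μ` is the eigenvalue `n²π²` of the Neumann operator `-∂²/∂x²`. -/
theorem neumann_modal_riccati_solution_general
    (μ α : ℝ) {γ Q11 Q12 Q22 : ℝ} (hγ : γ ≠ 0) (hQ11 : 0 ≤ Q11) (hQ22 : 0 ≤ Q22)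
    {P12 P22 P11 : ℝ}
    (hP12 : P12 = (-μ + √(μ ^ 2 + γ ^ 2 * Q11)) / γ ^ 2)
    (hP22 : P22 = (-α + √(α ^ 2 + γ ^ 2 * (Q22 + 2 * P12))) / γ ^ 2)
    (hP11 : P11 = α * P12 + (μ + γ ^ 2 * P12) * P22 - Q12) :
    0 ≤ P12 ∧ 0 ≤ P22 ∧
    0 = -2 * μ * P12 + Q11 - γ ^ 2 * P12 ^ 2 ∧
    0 = P11 - α * P12 - μ * P22 + Q12 - γ ^ 2 * P12 * P22 ∧
    0 = 2 * P12 - 2 * α * P22 + Q22 - γ ^ 2 * P22 ^ 2 := by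
  rw [← scalarRiccatiRoot] at hP12 hP22
  have hγ2 : γ ^ 2 ≠ 0 := pow_ne_zero 2 hγ
  have hP12_nonneg : 0 ≤ P12 := hP12 ▸ scalarRiccatiRoot_nonneg μ (sq_nonneg γ) hQ11
  have hconst : 0 ≤ Q22 + 2 * P12 := by positivity
  have hP22_nonneg : 0 ≤ P22 := hP22 ▸ scalarRiccatiRoot_nonneg α (sq_nonneg γ) hconst
  have hP12_eq : γ ^ 2 * P12 ^ 2 + 2 * μ * P12 = Q11 :=
    hP12 ▸ scalarRiccatiRoot_equation hγ2 (by positivity)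
  have hP22_eq : γ ^ 2 * P22 ^ 2 + 2 * α * P22 = Q22 + 2 * P12 :=
    hP22 ▸ scalarRiccatiRoot_equation hγ2 (by positivity)
  refine ⟨hP12_nonneg, hP22_nonneg, ?_, ?_, ?_⟩
  · linear_combination hP12_eq
  · linear_combination -hP11
  · linear_combination hP22_eq

/-- The explicit formulas for `P₁₂`, `P₂₂`, `P₁₁` give a
nonnegative solution of the `n`-th decoupled algebraic Riccati equations for
Neumann boundary LQR control of the damped wave equation (here `n ≥ 0`). -/
theorem neumann_modal_riccati_solution
    (n : ℕ) (α γ Q11 Q12 Q22 : ℝ)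
    (hα : 0 ≤ α) (hγ : 0 < γ) (hQ11 : 0 ≤ Q11) (hQ22 : 0 ≤ Q22)
    (P12 P22 P11 : ℝ)
    (hP12 : P12 = (-((n : ℝ) ^ 2 * Real.pi ^ 2) +
        Real.sqrt ((n : ℝ) ^ 4 * Real.pi ^ 4 + γ ^ 2 * Q11)) / γ ^ 2)
    (hP22 : P22 = (-α + Real.sqrt (α ^ 2 + γ ^ 2 * (Q22 + 2 * P12))) / γ ^ 2)
    (hP11 : P11 = α * P12 + ((n : ℝ) ^ 2 * Real.pi ^ 2 + γ ^ 2 * P12) * P22 - Q12) :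
    0 ≤ P12 ∧ 0 ≤ P22 ∧
    0 = -2 * (n : ℝ) ^ 2 * Real.pi ^ 2 * P12 + Q11 - γ ^ 2 * P12 ^ 2 ∧
    0 = P11 - α * P12 - (n : ℝ) ^ 2 * Real.pi ^ 2 * P22 + Q12 - γ ^ 2 * P12 * P22 ∧
    0 = 2 * P12 - 2 * α * P22 + Q22 - γ ^ 2 * P22 ^ 2 := by
  simpa only [mul_assoc] using neumann_modal_riccati_solution_general ((n : ℝ) ^ 2 * Real.pi ^ 2) α
    hγ.ne' hQ11 hQ22 (by rw [hP12]; ring_nf) hP22 hP11
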